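/- arXiv:1606.04626 — 7 statements merged into one kernel-verified Lean document; each statement's English description precedes it below -/
import Mathlib

section
/- Let n ≥ 2 be an integer. There exist smooth functions χ_k : ℝ^{n+1} → ℝ with 0 ≤ χ_k ≤ 1, χ_k radially symmetric, χ_k(x) = 1 whenever |x| < 1/(2k²), χ_k(x) = 0 whenever |x| > 1/k, and a sequence of real numbers c_k with c_k → 0 as k → ∞, with the following property: for every c > 0 and every Borel measure μ on ℝ^{n+1} such that μ({x : 0 < |x| ≤ ρ}) ≤ c·ρⁿ for all 0 < ρ ≤ 1, one has ∫ |∇χ_k(x)|² dμ(x) ≤ c·c_k for every k. -/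
open MeasureTheory Filter

/-- The basic bump: `1` for `‖y‖² ≤ 1/2`, `0` for `‖y‖ ≥ 1`. -/
noncomputable def lcBump (m : ℕ) (y : EuclideanSpace ℝ (Fin m)) : ℝ :=
  Real.smoothTransition ((1 - ‖y‖ ^ 2) * 2)

lemma lcBump_contDiff (m : ℕ) : ContDiff ℝ (⊤ : ℕ∞) (lcBump m) := by
  unfold lcBump
  exact Real.smoothTransition.contDiff.comp
    ((contDiff_const.sub (contDiff_norm_sq ℝ)).mul contDiff_const)

lemma lcBump_one {m : ℕ} {y : EuclideanSpace ℝ (Fin m)} (h : ‖y‖ ^ 2 ≤ 1 / 2) :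
    lcBump m y = 1 :=
  Real.smoothTransition.one_of_one_le (by linarith)

lemma lcBump_zero {m : ℕ} {y : EuclideanSpace ℝ (Fin m)} (h : 1 ≤ ‖y‖) :
    lcBump m y = 0 :=
  Real.smoothTransition.zero_of_nonpos (by nlinarith)

lemma lcBump_fderiv_small {m : ℕ} {y : EuclideanSpace ℝ (Fin m)} (h : ‖y‖ ≤ 1 / 2) :
    fderiv ℝ (lcBump m) y = 0 := by
  have h1 : lcBump m =ᶠ[nhds y] fun _ => (1 : ℝ) := by
    have : ∀ᶠ z in nhds y, ‖z‖ ^ 2 < 1 / 2 := by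
      apply (continuous_norm.pow 2).continuousAt.eventually_lt continuousAt_const
      have := norm_nonneg y
      change ‖y‖ ^ 2 < 1 / 2
      nlinarith
    filter_upwards [this] with z hz
    exact lcBump_one hz.le
  rw [h1.fderiv_eq]
  simp

lemma lcBump_fderiv_large {m : ℕ} {y : EuclideanSpace ℝ (Fin m)} (h : 1 < ‖y‖) :
    fderiv ℝ (lcBump m) y = 0 := by
  have h1 : lcBump m =ᶠ[nhds y] fun _ => (0 : ℝ) := by
    have : ∀ᶠ z in nhds y, 1 < ‖z‖ :=
      continuousAt_const.eventually_lt continuous_norm.continuousAt h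
    filter_upwards [this] with z hz
    exact lcBump_zero hz.le
  rw [h1.fderiv_eq]
  simp

lemma lcBump_fderiv_bdd (m : ℕ) : ∃ C : ℝ, 0 ≤ C ∧ ∀ y, ‖fderiv ℝ (lcBump m) y‖ ≤ C := by
  have hc : Continuous (fderiv ℝ (lcBump m)) :=
    (lcBump_contDiff m).continuous_fderiv (by simp)
  obtain ⟨C, hC⟩ := (isCompact_closedBall (0 : EuclideanSpace ℝ (Fin m)) 1).exists_bound_of_continuousOn
    hc.continuousOn
  refine ⟨max C 0, le_max_right _ _, fun y => ?_⟩
  by_cases h : 1 < ‖y‖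
  · rw [lcBump_fderiv_large h]; simp
  · exact (hC y (by simpa using h)).trans (le_max_left _ _)

/-- number of dyadic scales -/
def lcN (k : ℕ) : ℕ := Nat.log 2 (2 * k)

/-- The cutoff: an average of dyadically rescaled bumps. -/
noncomputable def lcChi (m k : ℕ) (x : EuclideanSpace ℝ (Fin m)) : ℝ :=
  (lcN k : ℝ)⁻¹ * ∑ j ∈ Finset.range (lcN k), lcBump m (((2 : ℝ) ^ j * k) • x)

lemma lcN_zero : lcN 0 = 0 := by simp [lcN]

lemma lcN_pos {k : ℕ} (hk : 1 ≤ k) : 1 ≤ lcN k :=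
  Nat.log_pos (by norm_num) (by omega)

lemma lcChi_fderiv (m k : ℕ) (x : EuclideanSpace ℝ (Fin m)) :
    fderiv ℝ (lcChi m k) x = (lcN k : ℝ)⁻¹ • ∑ j ∈ Finset.range (lcN k),
      ((2 : ℝ) ^ j * k) • fderiv ℝ (lcBump m) (((2 : ℝ) ^ j * k) • x) := by
  have hd : ∀ y, DifferentiableAt ℝ (lcBump m) y := fun y =>
    (lcBump_contDiff m).differentiable (by simp) y
  apply HasFDerivAt.fderiv
  apply HasFDerivAt.const_mul
  apply HasFDerivAt.fun_sum
  intro j _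
  have h1 : HasFDerivAt (fun x : EuclideanSpace ℝ (Fin m) => ((2 : ℝ) ^ j * k) • x)
      (((2 : ℝ) ^ j * k) • ContinuousLinearMap.id ℝ _) x :=
    (hasFDerivAt_id x).fun_const_smul ((2 : ℝ) ^ j * k)
  have h2 := (hd (((2 : ℝ) ^ j * k) • x)).hasFDerivAt.comp x h1
  have h3 : ∀ (a : ℝ) (L : EuclideanSpace ℝ (Fin m) →L[ℝ] ℝ),
      L ∘SL (a • ContinuousLinearMap.id ℝ _) = a • L := by
    intro a L
    apply ContinuousLinearMap.ext
    intro v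
    simp
  rw [h3] at h2
  exact h2

lemma lcChi_pointwise {m k : ℕ} (hk : 1 ≤ k) {C : ℝ}
    (hC : ∀ y, ‖fderiv ℝ (lcBump m) y‖ ≤ C) (x : EuclideanSpace ℝ (Fin m)) :
    ENNReal.ofReal (‖fderiv ℝ (lcChi m k) x‖ ^ 2) ≤ ∑ j ∈ Finset.range (lcN k),
      Set.indicator {x : EuclideanSpace ℝ (Fin m) | 0 < ‖x‖ ∧ ‖x‖ ≤ ((2 : ℝ) ^ j * k)⁻¹}
        (fun _ => ENNReal.ofReal (((lcN k : ℝ)⁻¹ * (((2 : ℝ) ^ j * k) * C)) ^ 2)) x := by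
  have hk' : (1 : ℝ) ≤ k := by exact_mod_cast hk
  have ha : ∀ j : ℕ, 0 < (2 : ℝ) ^ j * k := fun j => by positivity
  by_cases hz : ∀ j ∈ Finset.range (lcN k), fderiv ℝ (lcBump m) (((2 : ℝ) ^ j * k) • x) = 0
  · rw [lcChi_fderiv, Finset.sum_eq_zero (fun j hj => by rw [hz j hj, smul_zero])]
    simp
  push Not at hz
  obtain ⟨j, hj, hne⟩ := hz
  have key : ∀ i : ℕ, fderiv ℝ (lcBump m) (((2 : ℝ) ^ i * k) • x) ≠ 0 →
      1 / 2 < (2 : ℝ) ^ i * k * ‖x‖ ∧ (2 : ℝ) ^ i * k * ‖x‖ ≤ 1 := by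
    intro i hi
    have hn : ‖((2 : ℝ) ^ i * k) • x‖ = (2 : ℝ) ^ i * k * ‖x‖ := by
      rw [norm_smul, Real.norm_of_nonneg (ha i).le]
    rw [← hn]
    constructor
    · by_contra h
      exact hi (lcBump_fderiv_small (not_lt.mp h))
    · by_contra h
      exact hi (lcBump_fderiv_large (not_le.mp h))
  have hlt : ∀ i l : ℕ, i < l → 1 / 2 < (2 : ℝ) ^ i * k * ‖x‖ →
      (2 : ℝ) ^ l * k * ‖x‖ ≤ 1 → False := by
    intro i l hil h1 h2
    have : (2 : ℝ) ^ (i + 1) ≤ 2 ^ l := pow_le_pow_right₀ (by norm_num) hil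
    have h3 : (2 : ℝ) ^ (i + 1) * (k * ‖x‖) ≤ 2 ^ l * (k * ‖x‖) := by gcongr
    rw [pow_succ] at h3
    nlinarith
  obtain ⟨k1, k2⟩ := key j hne
  have hsum : fderiv ℝ (lcChi m k) x = (lcN k : ℝ)⁻¹ •
      ((2 : ℝ) ^ j * k) • fderiv ℝ (lcBump m) (((2 : ℝ) ^ j * k) • x) := by
    rw [lcChi_fderiv, Finset.sum_eq_single_of_mem j hj]
    intro i _ hij
    by_cases hi : fderiv ℝ (lcBump m) (((2 : ℝ) ^ i * k) • x) = 0
    · rw [hi, smul_zero]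
    · obtain ⟨i1, i2⟩ := key i hi
      rcases lt_or_gt_of_ne hij with h | h
      · exact (hlt i j h i1 k2).elim
      · exact (hlt j i h k1 i2).elim
  have hx : x ∈ {x : EuclideanSpace ℝ (Fin m) | 0 < ‖x‖ ∧ ‖x‖ ≤ ((2 : ℝ) ^ j * k)⁻¹} := by
    constructor
    · by_contra h
      have : ‖x‖ = 0 := le_antisymm (not_lt.mp h) (norm_nonneg x)
      rw [this] at k1
      norm_num at k1
    · rw [← one_div, le_div_iff₀ (ha j)]
      linarith
  refine le_trans ?_ (Finset.single_le_sum (f := fun j => Set.indicator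
    {x : EuclideanSpace ℝ (Fin m) | 0 < ‖x‖ ∧ ‖x‖ ≤ ((2 : ℝ) ^ j * k)⁻¹}
        (fun _ => ENNReal.ofReal (((lcN k : ℝ)⁻¹ * (((2 : ℝ) ^ j * k) * C)) ^ 2)) x)
        (fun _ _ => zero_le) hj)
  rw [Set.indicator_of_mem hx, hsum, norm_smul, norm_smul, Real.norm_of_nonneg (ha j).le,
    Real.norm_of_nonneg (by positivity)]
  apply ENNReal.ofReal_le_ofReal
  gcongr
  exact hC _

/-- The logarithmic-cutoff lemma: for `n ≥ 2` there are smooth radial cutoff functions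
`χ_k` on `ℝ^{n+1}`, equal to `1` on `{‖x‖ < 1/(2k²)}` and to `0` on `{‖x‖ > 1/k}`, and
constants `c_k → 0`, such that for any measure `μ` with `μ {0 < ‖x‖ ≤ ρ} ≤ c ρⁿ` for all
`0 < ρ ≤ 1` one has `∫ |∇χ_k|² dμ ≤ c · c_k`. -/
theorem log_cutoff_lemma (n : ℕ) (hn : 2 ≤ n) :
    ∃ (χ : ℕ → EuclideanSpace ℝ (Fin (n + 1)) → ℝ) (c : ℕ → ℝ),
      (∀ k, ContDiff ℝ (⊤ : ℕ∞) (χ k)) ∧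
      (∀ k x, 0 ≤ χ k x ∧ χ k x ≤ 1) ∧
      (∀ k x y, ‖x‖ = ‖y‖ → χ k x = χ k y) ∧
      (∀ (k : ℕ) x, ‖x‖ < 1 / (2 * (k : ℝ) ^ 2) → χ k x = 1) ∧
      (∀ (k : ℕ) x, 1 / (k : ℝ) < ‖x‖ → χ k x = 0) ∧
      Tendsto c atTop (nhds 0) ∧
      (∀ c' : ℝ, 0 < c' → ∀ μ : Measure (EuclideanSpace ℝ (Fin (n + 1))),
        (∀ ρ : ℝ, 0 < ρ → ρ ≤ 1 →
          μ {x : EuclideanSpace ℝ (Fin (n + 1)) | 0 < ‖x‖ ∧ ‖x‖ ≤ ρ}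
            ≤ ENNReal.ofReal (c' * ρ ^ n)) →
        ∀ k, ∫⁻ x, ENNReal.ofReal (‖fderiv ℝ (χ k) x‖ ^ 2) ∂μ
          ≤ ENNReal.ofReal (c' * c k)) := by
  obtain ⟨C, hC0, hC⟩ := lcBump_fderiv_bdd (n + 1)
  refine ⟨lcChi (n + 1), fun k => C ^ 2 * (lcN k : ℝ)⁻¹, ?_, ?_, ?_, ?_, ?_, ?_, ?_⟩
  · intro k
    unfold lcChi
    refine contDiff_const.mul (ContDiff.sum fun j _ => ?_)
    exact (lcBump_contDiff _).comp (contDiff_id.const_smul _)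
  · intro k x
    have h0 : ∀ y, 0 ≤ lcBump (n + 1) y := fun y => Real.smoothTransition.nonneg _
    have h1 : ∀ y, lcBump (n + 1) y ≤ 1 := fun y => Real.smoothTransition.le_one _
    constructor
    · exact mul_nonneg (by positivity) (Finset.sum_nonneg fun _ _ => h0 _)
    · have : ∑ j ∈ Finset.range (lcN k), lcBump (n + 1) (((2 : ℝ) ^ j * k) • x) ≤ lcN k := by
        refine (Finset.sum_le_sum fun j _ => h1 _).trans ?_
        simp
      unfold lcChi
      exact (mul_le_mul_of_nonneg_left this (by positivity)).trans inv_mul_le_one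
  · intro k x y hxy
    simp only [lcChi, lcBump, norm_smul, hxy]
  · intro k x hx
    rcases Nat.eq_zero_or_pos k with rfl | hk
    · norm_num at hx
      exact absurd hx (not_lt.mpr (norm_nonneg x))
    have hk' : (1 : ℝ) ≤ k := by exact_mod_cast hk
    have hN := lcN_pos hk
    have hN' : (lcN k : ℝ) ≠ 0 := by positivity
    unfold lcChi
    rw [Finset.sum_congr rfl (g := fun _ => (1 : ℝ))]
    · simp [hN']
    intro j hj
    apply lcBump_one
    have hp : 2 ^ lcN k ≤ 2 * k := Nat.pow_log_le_self 2 (by omega)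
    have hp2 : 2 ^ (j + 1) ≤ 2 * k :=
      (Nat.pow_le_pow_right (by norm_num) (Finset.mem_range.mp hj)).trans hp
    have hp3 : (2 : ℝ) ^ j ≤ k := by
      have : 2 ^ j ≤ k := by rw [pow_succ] at hp2; omega
      exact_mod_cast this
    rw [norm_smul, Real.norm_of_nonneg (by positivity)]
    have hle : (2 : ℝ) ^ j * k * ‖x‖ ≤ 1 / 2 := by
      calc (2 : ℝ) ^ j * k * ‖x‖ ≤ k * k * (1 / (2 * (k : ℝ) ^ 2)) := by gcongr
        _ = 1 / 2 := by field_simp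
    have : 0 ≤ (2 : ℝ) ^ j * k * ‖x‖ := by positivity
    nlinarith
  · intro k x hx
    rcases Nat.eq_zero_or_pos k with rfl | hk
    · simp [lcChi, lcN_zero]
    have hk' : (1 : ℝ) ≤ k := by exact_mod_cast hk
    unfold lcChi
    rw [Finset.sum_eq_zero, mul_zero]
    intro j _
    apply lcBump_zero
    rw [norm_smul, Real.norm_of_nonneg (by positivity)]
    have h1 : (1 : ℝ) ≤ 2 ^ j := one_le_pow₀ (by norm_num)
    calc (1 : ℝ) = 1 * k * (1 / k) := by field_simp
      _ ≤ 2 ^ j * k * ‖x‖ := by gcongr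
  · have hN : Tendsto lcN atTop atTop := by
      refine tendsto_atTop.mpr fun b => ?_
      filter_upwards [eventually_ge_atTop (2 ^ b)] with k hk
      exact Nat.le_log_of_pow_le (by norm_num) (by omega)
    have := (tendsto_inv_atTop_zero.comp (tendsto_natCast_atTop_atTop (R := ℝ) |>.comp hN)).const_mul
      (C ^ 2)
    simpa using this
  · intro c' hc' μ hμ k
    rcases Nat.eq_zero_or_pos k with rfl | hk
    · simp [lcChi_fderiv, lcN_zero]
    have hk' : (1 : ℝ) ≤ k := by exact_mod_cast hk
    have hN := lcN_pos hk
    have hN' : (lcN k : ℝ) ≠ 0 := by positivity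
    have hmeas : ∀ r : ℝ, MeasurableSet
        {x : EuclideanSpace ℝ (Fin (n + 1)) | 0 < ‖x‖ ∧ ‖x‖ ≤ r} := fun r =>
      (measurableSet_lt measurable_const measurable_norm).inter
        (measurableSet_le measurable_norm measurable_const)
    refine (lintegral_mono (lcChi_pointwise hk hC)).trans ?_
    rw [lintegral_finsetSum _ fun j _ => measurable_const.indicator (hmeas _)]
    have hterm : ∀ j ∈ Finset.range (lcN k), ∫⁻ x, Set.indicator
        {x : EuclideanSpace ℝ (Fin (n + 1)) | 0 < ‖x‖ ∧ ‖x‖ ≤ ((2 : ℝ) ^ j * k)⁻¹}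
        (fun _ => ENNReal.ofReal (((lcN k : ℝ)⁻¹ * (((2 : ℝ) ^ j * k) * C)) ^ 2)) x ∂μ ≤
        ENNReal.ofReal (c' * C ^ 2 * ((lcN k : ℝ)⁻¹) ^ 2) := by
      intro j _
      have ha : 1 ≤ (2 : ℝ) ^ j * k := by
        have h1 : (1 : ℝ) ≤ 2 ^ j := one_le_pow₀ (by norm_num)
        nlinarith
      generalize (2 : ℝ) ^ j * k = a at ha ⊢
      have ha0 : 0 < a := by linarith
      rw [lintegral_indicator_const (hmeas _)]
      refine (mul_le_mul_right (hμ a⁻¹ (by positivity) (inv_le_one_of_one_le₀ ha)) _).trans ?_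
      rw [← ENNReal.ofReal_mul (by positivity)]
      apply ENNReal.ofReal_le_ofReal
      have hpow : a⁻¹ ^ n ≤ a⁻¹ ^ 2 :=
        pow_le_pow_of_le_one (by positivity) (inv_le_one_of_one_le₀ ha) hn
      calc ((lcN k : ℝ)⁻¹ * (a * C)) ^ 2 * (c' * a⁻¹ ^ n)
          ≤ ((lcN k : ℝ)⁻¹ * (a * C)) ^ 2 * (c' * a⁻¹ ^ 2) := by gcongr
        _ = c' * C ^ 2 * ((lcN k : ℝ)⁻¹) ^ 2 := by field_simp
    refine (Finset.sum_le_sum hterm).trans ?_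
    rw [Finset.sum_const, Finset.card_range, ← ENNReal.ofReal_nsmul]
    apply ENNReal.ofReal_le_ofReal
    rw [nsmul_eq_mul]
    apply le_of_eq
    field_simp
end

section
/- Let V₀ > 0 and let A : (V₀, ∞) → (0, ∞) be a differentiable function such that A′(V) > 0 and A′(V)²·A(V) ≥ 16π for every V > V₀, and such that A(V) → ∞ as V → ∞. Then limsup_{V → ∞} (2/A(V))·(V − A(V)^{3/2}/(6√π)) ≤ 0. -/
open Filter

/-- If the (isoperimetric-profile–like) function `A` is differentiable on `(V₀, ∞)`,
positive there, with `A' > 0` and `A'(V)² A(V) ≥ 16π`, and `A(V) → ∞`, then the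
normalized isoperimetric deficit `(2/A(V)) (V - A(V)^{3/2}/(6√π))` has nonpositive
`limsup` as `V → ∞`. -/
theorem limsup_isoperimetric_deficit_nonpos
    (V₀ : ℝ) (hV₀ : 0 < V₀) (A : ℝ → ℝ)
    (hApos : ∀ V, V₀ < V → 0 < A V)
    (hdiff : ∀ V, V₀ < V → DifferentiableAt ℝ A V)
    (hA' : ∀ V, V₀ < V → 0 < deriv A V)
    (h16π : ∀ V, V₀ < V → 16 * Real.pi ≤ (deriv A V) ^ 2 * A V)
    (htop : Tendsto A atTop atTop) :
    limsup (fun V : ℝ =>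
        (2 / A V) * (V - (A V) ^ ((3 : ℝ) / 2) / (6 * Real.sqrt Real.pi))) atTop ≤ 0 := by
  have hpi : 0 < Real.sqrt Real.pi := Real.sqrt_pos.mpr Real.pi_pos
  set g : ℝ → ℝ := fun V => V - (A V) ^ ((3 : ℝ) / 2) / (6 * Real.sqrt Real.pi) with hg
  have hder : ∀ V, V₀ < V → HasDerivAt g
      (1 - (deriv A V * (3 / 2) * (A V) ^ ((3 : ℝ) / 2 - 1)) / (6 * Real.sqrt Real.pi)) V := by
    intro V hV
    exact (hasDerivAt_id V).sub
      (((hdiff V hV).hasDerivAt.rpow_const (Or.inl (hApos V hV).ne')).div_const _)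
  have hanti : AntitoneOn g (Set.Ici (V₀ + 1)) := by
    apply antitoneOn_of_deriv_nonpos (convex_Ici _)
    · intro V hV
      have hV : V₀ + 1 ≤ V := hV
      exact (hder V (by linarith)).continuousAt.continuousWithinAt
    · intro V hV
      rw [interior_Ici] at hV
      have hV : V₀ + 1 < V := hV
      exact (hder V (by linarith)).differentiableAt.differentiableWithinAt
    · intro V hV
      rw [interior_Ici] at hV
      have hV : V₀ + 1 < V := hV
      have hV' : V₀ < V := by linarith
      rw [(hder V hV').deriv]
      have e : (3 : ℝ) / 2 - 1 = 1 / 2 := by norm_num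
      rw [e, ← Real.sqrt_eq_rpow, sub_nonpos, le_div_iff₀ (by positivity)]
      have h1 : 4 * Real.sqrt Real.pi ≤ deriv A V * Real.sqrt (A V) := by
        refine (sq_le_sq₀ (by positivity) (mul_nonneg (hA' V hV').le (Real.sqrt_nonneg _))).mp ?_
        rw [mul_pow, mul_pow, Real.sq_sqrt Real.pi_pos.le, Real.sq_sqrt (hApos V hV').le]
        linarith [h16π V hV']
      linarith
  have hlim : Tendsto (fun V => (2 / A V) * g (V₀ + 1)) atTop (nhds 0) := by
    simpa using (htop.const_div_atTop 2).mul_const (g (V₀ + 1))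
  have hev : ∀ ε : ℝ, 0 < ε → ∀ᶠ V in atTop, (2 / A V) * g V ≤ ε := by
    intro ε hε
    filter_upwards [hlim.eventually (gt_mem_nhds hε), eventually_ge_atTop (V₀ + 1)] with V h1 h2
    have h3 : g V ≤ g (V₀ + 1) := hanti Set.self_mem_Ici h2 h2
    have h4 : 0 ≤ 2 / A V := (div_pos two_pos (hApos V (by linarith))).le
    exact (mul_le_mul_of_nonneg_left h3 h4).trans h1.le
  rw [limsup_eq]
  by_cases hb : BddBelow {a | ∀ᶠ V in atTop, (2 / A V) * g V ≤ a}
  · apply le_of_forall_pos_le_add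
    intro ε hε
    rw [zero_add]
    exact csInf_le hb (hev ε hε)
  · exact (Real.sInf_of_not_bddBelow hb).le
end

section
/- For every m₀ > 0 there is a constant C > 0 with the following property. For every m ∈ (0, m₀] and every r ≥ max(1, m), set A = 4πr²(1 + m/(2r))⁴ and V = 4π∫_{m/2}^{r} (1 + m/(2s))⁶ s² ds. Then |V − A^{3/2}/(6√π) − (m/2)·A| ≤ C·√A. -/
open MeasureTheory intervalIntegral

lemma schw_integral (a r : ℝ) (ha : 0 < a) (hr : a ≤ r) :
    ∫ s in a..r, (1 + (2 * a) / (2 * s)) ^ 6 * s ^ 2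
      = r ^ 3 / 3 + 3 * a * r ^ 2 + 15 * a ^ 2 * r + 20 * a ^ 3 * Real.log (r / a)
        - 15 * a ^ 4 / r - 3 * a ^ 5 / r ^ 2 - a ^ 6 / (3 * r ^ 3) := by
  have hr0 : 0 < r := ha.trans_le hr
  have hpos : ∀ s ∈ Set.uIcc a r, s ≠ 0 := by
    intro s hs
    rw [Set.uIcc_of_le hr] at hs
    exact (ha.trans_le hs.1).ne'
  have hd : ∀ s ∈ Set.uIcc a r, HasDerivAt (fun s : ℝ => s ^ 3 / 3 + 3 * a * s ^ 2
      + 15 * a ^ 2 * s + 20 * a ^ 3 * Real.log s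
        - 15 * a ^ 4 * s⁻¹ - 3 * a ^ 5 * (s⁻¹) ^ 2 - a ^ 6 / 3 * (s⁻¹) ^ 3)
      ((1 + (2 * a) / (2 * s)) ^ 6 * s ^ 2) s := by
    intro s hs
    have h0 := hpos s hs
    have hi := hasDerivAt_id' s
    have hv := hasDerivAt_inv h0
    have := (((((((hi.pow 3).div_const 3).add ((hi.pow 2).const_mul (3 * a))).add
      (hi.const_mul (15 * a ^ 2))).add ((Real.hasDerivAt_log h0).const_mul (20 * a ^ 3))).sub
      (hv.const_mul (15 * a ^ 4))).sub ((hv.pow 2).const_mul (3 * a ^ 5))).sub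
      ((hv.pow 3).const_mul (a ^ 6 / 3))
    refine this.congr_deriv ?_
    norm_num
    field_simp
    ring
  rw [integral_eq_sub_of_hasDerivAt hd]
  · rw [Real.log_div hr0.ne' ha.ne']
    field_simp
    ring
  · apply ContinuousOn.intervalIntegrable
    have : ∀ s ∈ Set.uIcc a r, 2 * s ≠ 0 := fun s hs => mul_ne_zero two_ne_zero (hpos s hs)
    fun_prop (disch := assumption)

lemma schw_bound (a r : ℝ) (ha : 0 < a) (hr : 2 * a ≤ r) :
    |(r ^ 3 / 3 + 3 * a * r ^ 2 + 15 * a ^ 2 * r + 20 * a ^ 3 * Real.log (r / a)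
        - 15 * a ^ 4 / r - 3 * a ^ 5 / r ^ 2 - a ^ 6 / (3 * r ^ 3))
      - ((r + a) ^ 2 / r) ^ 3 / 3 - a * ((r + a) ^ 2 / r) ^ 2|
      ≤ 26 * a ^ 2 * ((r + a) ^ 2 / r) := by
  have hr0 : 0 < r := by linarith
  obtain ⟨t, ht⟩ : ∃ t, t = a / r := ⟨_, rfl⟩
  have hat : a = t * r := by rw [ht]; field_simp
  have ht0 : 0 < t := by rw [ht]; positivity
  have ht1 : t ≤ 1 / 2 := by rw [ht, div_le_iff₀ hr0]; linarith
  have hL : r / a = t⁻¹ := by rw [ht]; field_simp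
  have hl0 : 0 ≤ Real.log t⁻¹ := Real.log_nonneg (by
    rw [one_le_inv₀ ht0]; linarith)
  have hl1 : t * Real.log t⁻¹ ≤ 1 := by
    have h := Real.log_le_sub_one_of_pos (inv_pos.2 ht0)
    have h2 : t * Real.log t⁻¹ ≤ t * t⁻¹ :=
      mul_le_mul_of_nonneg_left (by linarith) ht0.le
    rwa [mul_inv_cancel₀ ht0.ne'] at h2
  rw [hL]
  have hm0 : 0 ≤ t * Real.log t⁻¹ := mul_nonneg ht0.le hl0
  generalize hl : Real.log t⁻¹ = l at *
  have e1 : (r ^ 3 / 3 + 3 * a * r ^ 2 + 15 * a ^ 2 * r + 20 * a ^ 3 * l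
        - 15 * a ^ 4 / r - 3 * a ^ 5 / r ^ 2 - a ^ 6 / (3 * r ^ 3))
      - ((r + a) ^ 2 / r) ^ 3 / 3 - a * ((r + a) ^ 2 / r) ^ 2
      = a ^ 2 * r * (6 + 20 * (t * l) - 38 / 3 * t - 24 * t ^ 2 - 6 * t ^ 3 - 2 / 3 * t ^ 4) := by
    rw [hat]; field_simp; ring
  have hρ : r ≤ (r + a) ^ 2 / r := by
    rw [le_div_iff₀ hr0]; nlinarith
  have p2 : t ^ 2 ≤ (1 / 2) ^ 2 := by gcongr
  have p3 : t ^ 3 ≤ (1 / 2) ^ 3 := by gcongr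
  have p4 : t ^ 4 ≤ (1 / 2) ^ 4 := by gcongr
  have q2 : 0 < t ^ 2 := by positivity
  have q3 : 0 < t ^ 3 := by positivity
  have q4 : 0 < t ^ 4 := by positivity
  have hb : |6 + 20 * (t * l) - 38 / 3 * t - 24 * t ^ 2 - 6 * t ^ 3 - 2 / 3 * t ^ 4| ≤ 26 := by
    rw [abs_le]; constructor <;> linarith
  rw [e1, abs_mul, abs_of_pos (by positivity : 0 < a ^ 2 * r)]
  calc _ ≤ a ^ 2 * r * 26 := by gcongr
    _ = 26 * a ^ 2 * r := by ring
    _ ≤ _ := by gcongr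

/-- Uniform expansion of the inverse Schwarzschild isoperimetric profile: for masses
`0 < m ≤ m₀` and radii `r ≥ max 1 m`, with `A = 4πr²(1 + m/(2r))⁴` the area of the
centered coordinate sphere and `V = 4π ∫_{m/2}^r (1 + m/(2s))⁶ s² ds` the enclosed
Schwarzschild volume, one has `|V - A^{3/2}/(6√π) - (m/2) A| ≤ C √A` with `C = C(m₀)`. -/
theorem schwarzschild_profile_expansion (m₀ : ℝ) (hm₀ : 0 < m₀) :
    ∃ C : ℝ, 0 < C ∧ ∀ m r : ℝ, 0 < m → m ≤ m₀ → max 1 m ≤ r →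
      |(4 * Real.pi * ∫ s in (m / 2)..r, (1 + m / (2 * s)) ^ 6 * s ^ 2)
          - (4 * Real.pi * r ^ 2 * (1 + m / (2 * r)) ^ 4) ^ ((3 : ℝ) / 2)
              / (6 * Real.sqrt Real.pi)
          - (m / 2) * (4 * Real.pi * r ^ 2 * (1 + m / (2 * r)) ^ 4)|
        ≤ C * Real.sqrt (4 * Real.pi * r ^ 2 * (1 + m / (2 * r)) ^ 4) := by
  have hπ := Real.pi_pos
  have hq : 0 < Real.sqrt Real.pi := Real.sqrt_pos.2 hπ
  refine ⟨13 * Real.sqrt Real.pi * m₀ ^ 2, by positivity, ?_⟩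
  intro m r hm hmm hr
  have hmr : m ≤ r := (le_max_right _ _).trans hr
  obtain ⟨a, rfl⟩ : ∃ a, m = 2 * a := ⟨m / 2, by ring⟩
  have ha : 0 < a := by linarith
  have hr0 : 0 < r := by linarith
  have hB := schw_bound a r ha hmr
  have hI := schw_integral a r ha (by linarith)
  rw [← hI] at hB
  rw [show 2 * a / 2 = a by ring]
  generalize (∫ s in a..r, (1 + (2 * a) / (2 * s)) ^ 6 * s ^ 2) = I at *
  have hρ : 0 < (r + a) ^ 2 / r := by positivity
  have hA : 4 * Real.pi * r ^ 2 * (1 + 2 * a / (2 * r)) ^ 4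
      = (2 * Real.sqrt Real.pi * ((r + a) ^ 2 / r)) ^ 2 := by
    rw [mul_pow, mul_pow, Real.sq_sqrt hπ.le]
    field_simp
    ring
  rw [hA]
  generalize (r + a) ^ 2 / r = ρ at *
  generalize hqd : Real.sqrt Real.pi = q at *
  have hqq : Real.pi = q ^ 2 := by rw [← hqd, Real.sq_sqrt hπ.le]
  have hx : 0 < 2 * q * ρ := by positivity
  have h3 : ((2 * q * ρ) ^ 2) ^ ((3 : ℝ) / 2) = (2 * q * ρ) ^ 3 := by
    rw [← Real.rpow_natCast (2 * q * ρ) 2, ← Real.rpow_mul hx.le,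
      ← Real.rpow_natCast (2 * q * ρ) 3]
    norm_num
  rw [h3, Real.sqrt_sq hx.le, hqq]
  have e : 4 * q ^ 2 * I - (2 * q * ρ) ^ 3 / (6 * q) - a * (2 * q * ρ) ^ 2
      = 4 * q ^ 2 * (I - ρ ^ 3 / 3 - a * ρ ^ 2) := by
    field_simp; ring
  rw [e, abs_mul, abs_of_pos (by positivity : 0 < 4 * q ^ 2)]
  calc _ ≤ 4 * q ^ 2 * (26 * a ^ 2 * ρ) := by gcongr
    _ = 13 * q * (2 * a) ^ 2 * (2 * q * ρ) := by ring
    _ ≤ _ := by gcongr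
end

section
/- Let (a_k) be a sequence in ℝ³ and (ρ_k) a sequence of reals with ρ_k > 1 for all k, ρ_k → ∞, and |a_k| − ρ_k → ∞ as k → ∞. Then lim_{k → ∞} ρ_k^{-2} · ∫_1^{ρ_k} t · ( ∫_{S_t(a_k)} |x|^{-3} dH²(x) ) dt = 0. -/
open MeasureTheory Filter

noncomputable def radProj (c : EuclideanSpace ℝ (Fin 3)) (t : ℝ) (x : EuclideanSpace ℝ (Fin 3)) :
    EuclideanSpace ℝ (Fin 3) := c + (t / ‖x - c‖) • (x - c)

lemma radProj_lip (c : EuclideanSpace ℝ (Fin 3)) (t : ℝ) (ht : 0 < t) :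
    LipschitzOnWith 1 (radProj c t) {x | t ≤ ‖x - c‖} := by
  apply LipschitzOnWith.of_dist_le_mul
  intro x hx y hy
  simp only [Set.mem_ofPred_eq] at hx hy
  simp only [radProj, NNReal.coe_one, one_mul, dist_add_left]
  have e : dist x y = ‖(x - c) - (y - c)‖ := by rw [dist_eq_norm]; congr 1; abel
  rw [e, dist_eq_norm]
  generalize x - c = u at *
  generalize y - c = v at *
  have hu : 0 < ‖u‖ := ht.trans_le hx
  have hv : 0 < ‖v‖ := ht.trans_le hy
  apply le_of_sq_le_sq _ (norm_nonneg _)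
  rw [norm_sub_sq_real, norm_sub_sq_real, norm_smul, norm_smul, real_inner_smul_left,
    real_inner_smul_right]
  have hi := real_inner_le_norm u v
  rw [Real.norm_of_nonneg (by positivity), Real.norm_of_nonneg (by positivity),
    div_mul_cancel₀ _ hu.ne', div_mul_cancel₀ _ hv.ne']
  set p := ‖u‖
  set q := ‖v‖
  obtain ⟨w, hw⟩ : ∃ w, inner ℝ u v = p * q * w := ⟨inner ℝ u v / (p * q), by field_simp⟩
  rw [hw] at hi ⊢
  have hw1 : w ≤ 1 := by
    by_contra h
    push Not at h
    nlinarith [mul_pos hu hv]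
  have : t / p * (t / q * (p * q * w)) = t ^ 2 * w := by field_simp
  rw [this]
  nlinarith [mul_nonneg (sub_nonneg.2 hw1) (sub_nonneg.2 (mul_le_mul hx hy ht.le hu.le)), sq_nonneg (p - q)]

noncomputable def face (i : Fin 3) (r : ℝ) (p : Fin 2 → ℝ) : EuclideanSpace ℝ (Fin 3) :=
  WithLp.toLp 2 (i.insertNth (α := fun _ => ℝ) r p)

lemma face_lip : ∃ L : NNReal, ∀ i r, LipschitzWith L (face i r) := by
  refine ⟨_, fun i r => (PiLp.lipschitzWith_toLp 2 (fun _ : Fin 3 => ℝ)).comp (Kg := 1)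
    (g := fun p : Fin 2 → ℝ => i.insertNth (α := fun _ => ℝ) r p) ?_⟩
  apply LipschitzWith.of_dist_le_mul
  intro p q
  rw [NNReal.coe_one, one_mul, dist_pi_le_iff dist_nonneg]
  rw [i.forall_iff_succAbove]
  exact ⟨by simp, fun j => by simpa using dist_le_pi_dist p q j⟩

lemma exists_face (x n : EuclideanSpace ℝ (Fin 3)) (hn : n ≠ 0) (s : ℝ) (hx : ‖x‖ ≤ s) :
    ∃ r : ℝ, 0 ≤ r ∧ ∃ i : Fin 3, ∃ p ∈ Set.Icc (fun _ : Fin 2 => -s) (fun _ => s),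
      x + r • n = face i s p ∨ x + r • n = face i (-s) p := by
  let F : ℝ → ℝ := fun r => ‖(x + r • n).ofLp‖
  have hF : Continuous F := by fun_prop
  have h0 : F 0 ≤ s := by
    simp only [F, zero_smul, add_zero]
    refine le_trans ?_ hx
    rw [pi_norm_le_iff_of_nonneg (norm_nonneg _)]
    exact fun i => PiLp.norm_apply_le x i
  have hs : 0 ≤ s := (norm_nonneg _).trans hx
  obtain ⟨j, hj⟩ : ∃ j, n j ≠ 0 := by
    by_contra h
    push Not at h
    exact hn (by ext j; simp [h j])
  let R := (s + |x j|) / |n j|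
  have hR0 : 0 ≤ R := by positivity
  have hR : s ≤ F R := by
    have h1 : ‖(x + R • n) j‖ ≤ F R := norm_le_pi_norm (x + R • n).ofLp j
    refine le_trans ?_ h1
    have h2 : |R * n j| = s + |x j| := by
      rw [abs_mul, abs_of_nonneg hR0]
      exact div_mul_cancel₀ _ (abs_ne_zero.2 hj)
    simp only [PiLp.add_apply, PiLp.smul_apply, smul_eq_mul, Real.norm_eq_abs]
    have := abs_sub_abs_le_abs_sub (R * n j) (-x j)
    rw [abs_neg, sub_neg_eq_add, add_comm (R * n j)] at this
    linarith
  obtain ⟨r, hr, hrs⟩ := intermediate_value_Icc hR0 hF.continuousOn ⟨h0, hR⟩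
  obtain ⟨i, hi⟩ := Finite.exists_max (fun i => ‖(x + r • n) i‖)
  have hi' : ‖(x + r • n) i‖ = s := by
    apply le_antisymm
    · rw [← hrs]; exact norm_le_pi_norm (x + r • n).ofLp i
    · rw [← hrs]; exact (pi_norm_le_iff_of_nonneg (norm_nonneg _)).2 hi
  refine ⟨r, hr.1, i, i.removeNth (x + r • n).ofLp, ?_, ?_⟩
  · rw [Set.mem_Icc, Pi.le_def, Pi.le_def, ← forall_and]
    intro k
    rw [← abs_le, ← hi']
    exact hi _
  · have hf : x + r • n = face i ((x + r • n) i) (i.removeNth (x + r • n).ofLp) := by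
      unfold face
      rw [Fin.insertNth_self_removeNth]
    rcases (abs_eq hs).1 hi' with h | h
    · left; rwa [h] at hf
    · right; rwa [h] at hf

lemma area_bound : ∃ K : ℝ, 0 ≤ K ∧ ∀ (c : EuclideanSpace ℝ (Fin 3)) (t s : ℝ), 0 < t → 0 ≤ s →
    μH[2] (Metric.sphere c t ∩ {x | ‖x‖ ≤ s}) ≤ ENNReal.ofReal (K * s ^ 2) := by
  obtain ⟨L, hL⟩ := face_lip
  refine ⟨24 * L ^ 2, by positivity, fun c t s ht hs => ?_⟩
  let Q := Set.Icc (fun _ : Fin 2 => -s) (fun _ => s)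
  let O := {x | t ≤ ‖x - c‖}
  have hb : ∀ i r, μH[2] (radProj c t '' (O ∩ face i r '' Q)) ≤ ENNReal.ofReal (4 * L ^ 2 * s ^ 2) := by
    intro i r
    have h1 := ((radProj_lip c t ht).mono (Set.inter_subset_left (t := face i r '' Q))).hausdorffMeasure_image_le
      (d := 2) (by norm_num)
    have h2 := (hL i r).hausdorffMeasure_image_le (d := 2) (by norm_num) Q
    have h3 : (μH[2] : Measure (Fin 2 → ℝ)) = volume := by
      simpa using hausdorffMeasure_pi_real (ι := Fin 2)
    rw [h3, Real.volume_Icc_pi] at h2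
    refine (h1.trans ?_)
    simp only [ENNReal.coe_one, ENNReal.one_rpow, one_mul]
    refine (measure_mono Set.inter_subset_right).trans (h2.trans (le_of_eq ?_))
    simp only [Fin.prod_univ_two]
    rw [← ENNReal.ofReal_mul (by linarith), show ((2 : ℝ)) = ((2 : ℕ) : ℝ) by norm_num,
      ENNReal.rpow_natCast, ← ENNReal.ofReal_coe_nnreal, ← ENNReal.ofReal_pow (by positivity),
      ← ENNReal.ofReal_mul (by positivity)]
    congr 1
    ring
  have hsub : Metric.sphere c t ∩ {x | ‖x‖ ≤ s} ⊆ ⋃ i : Fin 3,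
      (radProj c t '' (O ∩ face i s '' Q) ∪ radProj c t '' (O ∩ face i (-s) '' Q)) := by
    rintro x ⟨hx, hxs⟩
    have hxt : ‖x - c‖ = t := by simpa [dist_eq_norm] using hx
    have hn : x - c ≠ 0 := by
      intro h; rw [h, norm_zero] at hxt; exact ht.ne hxt
    obtain ⟨r, hr, i, p, hp, h⟩ := exists_face x (x - c) hn s hxs
    have e : x + r • (x - c) - c = (1 + r) • (x - c) := by module
    have hnm : ‖x + r • (x - c) - c‖ = (1 + r) * t := by
      rw [e, norm_smul, hxt, Real.norm_of_nonneg (by positivity)]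
    have hO : x + r • (x - c) ∈ O := by
      change t ≤ _
      rw [hnm]; nlinarith
    have hP : radProj c t (x + r • (x - c)) = x := by
      unfold radProj
      rw [hnm, e, smul_smul]
      have : t / ((1 + r) * t) * (1 + r) = 1 := by field_simp
      rw [this]; module
    refine Set.mem_iUnion.2 ⟨i, ?_⟩
    rcases h with h | h
    · exact Or.inl ⟨_, ⟨hO, p, hp, h.symm⟩, hP⟩
    · exact Or.inr ⟨_, ⟨hO, p, hp, h.symm⟩, hP⟩
  refine (measure_mono hsub).trans ((measure_iUnion_fintype_le _ _).trans ?_)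
  refine (Finset.sum_le_sum fun i _ => (measure_union_le _ _).trans (add_le_add (hb i s) (hb i (-s)))).trans ?_
  rw [Finset.sum_const, Finset.card_univ, Fintype.card_fin, ← ENNReal.ofReal_add (by positivity) (by positivity),
    ← ENNReal.ofReal_nsmul]
  apply le_of_eq; congr 1; simp; ring

lemma integral_bound : ∃ C : ℝ, 0 ≤ C ∧ ∀ (c : EuclideanSpace ℝ (Fin 3)) (t m : ℝ), 0 < t → 0 < m →
    m ≤ ‖c‖ - t →
    ‖∫ x in Metric.sphere c t, (‖x‖ ^ 3)⁻¹ ∂μH[2]‖ ≤ C / m := by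
  obtain ⟨K, hK, h⟩ := area_bound
  refine ⟨8 * K, by positivity, fun c t m ht hm hmc => ?_⟩
  have key : ∫⁻ x in Metric.sphere c t, ‖(‖x‖ ^ 3)⁻¹‖ₑ ∂μH[2] ≤ ENNReal.ofReal (8 * K / m) := by
    let A : ℕ → Set (EuclideanSpace ℝ (Fin 3)) := fun n =>
      (Metric.sphere c t ∩ {x | ‖x‖ ≤ 2 ^ (n + 1) * m}) ∩ {x | 2 ^ n * m ≤ ‖x‖}
    have hA : ∀ n, MeasurableSet (A n) := fun n =>
      ((Metric.isClosed_sphere.inter (isClosed_le continuous_norm continuous_const)).inter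
        (isClosed_le continuous_const continuous_norm)).measurableSet
    have hcov : Metric.sphere c t ⊆ ⋃ n, A n := by
      intro x hx
      have hxt : ‖x - c‖ = t := by simpa [dist_eq_norm] using hx
      have h1 : m ≤ ‖x‖ := by
        have := norm_sub_norm_le c x
        rw [norm_sub_rev] at this
        linarith
      obtain ⟨n, hn1, hn2⟩ := exists_nat_pow_near (x := ‖x‖ / m) ((one_le_div hm).2 h1) (one_lt_two)
      rw [le_div_iff₀ hm] at hn1
      rw [div_lt_iff₀ hm] at hn2
      exact Set.mem_iUnion.2 ⟨n, ⟨hx, hn2.le⟩, hn1⟩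
    have hterm : ∀ n, ∫⁻ x in A n, ‖(‖x‖ ^ 3)⁻¹‖ₑ ∂μH[2] ≤ ENNReal.ofReal (4 * K / m * (1 / 2) ^ n) := by
      intro n
      have : ∫⁻ x in A n, ‖(‖x‖ ^ 3)⁻¹‖ₑ ∂μH[2] ≤
          ∫⁻ x in A n, ENNReal.ofReal (((2 ^ n * m) ^ 3)⁻¹) ∂μH[2] := by
        refine setLIntegral_mono' (hA n) fun x hx => ?_
        rw [Real.enorm_of_nonneg (by positivity)]
        apply ENNReal.ofReal_le_ofReal
        have : 2 ^ n * m ≤ ‖x‖ := hx.2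
        gcongr
      refine this.trans ?_
      rw [setLIntegral_const]
      refine (mul_le_mul_right ((measure_mono Set.inter_subset_left).trans
        (h c t (2 ^ (n + 1) * m) ht (by positivity))) _).trans ?_
      rw [← ENNReal.ofReal_mul (by positivity)]
      apply le_of_eq; congr 1
      rw [div_pow, one_pow]
      field_simp
      ring
    have hsum : HasSum (fun n : ℕ => 4 * K / m * (1 / 2 : ℝ) ^ n) (8 * K / m) := by
      have := hasSum_geometric_two.mul_left (4 * K / m)
      have e : 8 * K / m = 4 * K / m * 2 := by ring
      rw [e]; exact this
    calc _ ≤ ∫⁻ x in ⋃ n, A n, ‖(‖x‖ ^ 3)⁻¹‖ₑ ∂μH[2] := lintegral_mono_set hcov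
      _ ≤ ∑' n, ∫⁻ x in A n, ‖(‖x‖ ^ 3)⁻¹‖ₑ ∂μH[2] := lintegral_iUnion_le _ _
      _ ≤ ∑' n, ENNReal.ofReal (4 * K / m * (1 / 2) ^ n) := ENNReal.tsum_le_tsum hterm
      _ = _ := by
        rw [← ENNReal.ofReal_tsum_of_nonneg (fun n => by positivity) hsum.summable, hsum.tsum_eq]
  have h2 := (enorm_integral_le_lintegral_enorm (μ := μH[2].restrict (Metric.sphere c t)) (fun x : EuclideanSpace ℝ (Fin 3) => (‖x‖ ^ 3)⁻¹)).trans key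
  rw [← ofReal_norm] at h2
  exact (ENNReal.ofReal_le_ofReal_iff (by positivity)).1 h2

/-- If `ρ_k > 1`, `ρ_k → ∞` and `‖a_k‖ - ρ_k → ∞`, then
`ρ_k⁻² ∫_1^{ρ_k} t (∫_{S_t(a_k)} ‖x‖⁻³ dH²) dt → 0`. -/
theorem offcenter_cubic_shell_integral_small
    (a : ℕ → EuclideanSpace ℝ (Fin 3)) (ρ : ℕ → ℝ)
    (hρ1 : ∀ k, 1 < ρ k)
    (hρ : Tendsto ρ atTop atTop)
    (haρ : Tendsto (fun k => ‖a k‖ - ρ k) atTop atTop) :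
    Tendsto (fun k => (ρ k ^ 2)⁻¹ *
        ∫ t in (1 : ℝ)..(ρ k), t * ∫ x in Metric.sphere (a k) t, (‖x‖ ^ 3)⁻¹ ∂μH[2])
      atTop (nhds 0) := by
  obtain ⟨C, hC, h⟩ := integral_bound
  refine squeeze_zero_norm' (a := fun k => C / (‖a k‖ - ρ k)) ?_ (haρ.const_div_atTop C)
  filter_upwards [haρ.eventually_gt_atTop 0] with k hk
  have h1 := hρ1 k
  have hb := intervalIntegral.norm_integral_le_of_norm_le_const (a := 1) (b := ρ k)
    (f := fun t => t * ∫ x in Metric.sphere (a k) t, (‖x‖ ^ 3)⁻¹ ∂μH[2])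
    (C := ρ k * (C / (‖a k‖ - ρ k))) (by
      intro t ht
      rw [Set.uIoc_of_le h1.le] at ht
      have ht0 : 0 < t := by linarith [ht.1]
      rw [norm_mul, Real.norm_of_nonneg ht0.le]
      exact mul_le_mul ht.2 (h _ _ _ ht0 hk (by linarith [ht.2])) (norm_nonneg _) (by linarith))
  rw [norm_mul, Real.norm_of_nonneg (by positivity), inv_mul_le_iff₀ (by positivity)]
  refine hb.trans ?_
  rw [abs_of_pos (by linarith)]
  have : 0 ≤ C / (‖a k‖ - ρ k) := by positivity
  nlinarith [mul_nonneg (by linarith : 0 ≤ ρ k) this]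
end

section
/- Let (a_k) be a sequence in ℝ³ and (ρ_k) a sequence of reals with ρ_k > 1 for all k, ρ_k → ∞, and |a_k| − ρ_k → ∞ as k → ∞. Then lim_{k → ∞} ρ_k^{-2} · ∫_1^{ρ_k} ( ∫_{S_t(a_k)} |x|^{-2} dH²(x) ) dt = 0. -/
open MeasureTheory Filter

/-- The unit sphere has finite two-dimensional Hausdorff measure. -/
lemma unit_sphere_finite :
    (μH[2] : Measure (EuclideanSpace ℝ (Fin 3))) (Metric.sphere 0 1) < ⊤ := by
  let f : (Fin 2 → ℝ) → EuclideanSpace ℝ (Fin 3) := fun p =>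
    !₂[Real.sin (p 0) * Real.cos (p 1), Real.sin (p 0) * Real.sin (p 1), Real.cos (p 0)]
  have hf : ContDiff ℝ 1 f := by
    rw [contDiff_euclidean]
    intro i
    fin_cases i
    · simp [f]; fun_prop
    · simp [f]; fun_prop
    · simp [f]; fun_prop
  have hc : IsCompact (Metric.closedBall (0 : Fin 2 → ℝ) Real.pi) := isCompact_closedBall _ _
  obtain ⟨K, hK⟩ :=
    (hf.locallyLipschitz.locallyLipschitzOn).exists_lipschitzOnWith_of_compact hc
  have h1 := hK.hausdorffMeasure_image_le (d := 2) (by norm_num)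
  have hvol : (μH[2] : Measure (Fin 2 → ℝ)) = volume := by
    have := hausdorffMeasure_pi_real (ι := Fin 2)
    simpa using this
  rw [hvol] at h1
  have hsub : Metric.sphere (0 : EuclideanSpace ℝ (Fin 3)) 1 ⊆
      f '' Metric.closedBall 0 Real.pi := by
    intro x hx
    have hx1 : x 0 ^ 2 + x 1 ^ 2 + x 2 ^ 2 = 1 := by
      have h : ‖x‖ = 1 := by simpa using hx
      have h2 := EuclideanSpace.norm_sq_eq x
      rw [h, Fin.sum_univ_three] at h2
      simp only [Real.norm_eq_abs, sq_abs] at h2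
      linarith
    have hz : x 2 ^ 2 ≤ 1 := by nlinarith [sq_nonneg (x 0), sq_nonneg (x 1)]
    have hz' := abs_le.1 ((sq_le_one_iff_abs_le_one _).1 hz)
    let z : ℂ := ⟨x 0, x 1⟩
    have hn : ‖z‖ = Real.sin (Real.arccos (x 2)) := by
      rw [Real.sin_arccos, Complex.norm_def, Complex.normSq_apply]
      congr 1
      simp only [z]
      linarith
    refine ⟨![Real.arccos (x 2), Complex.arg z], ?_, ?_⟩
    · rw [mem_closedBall_zero_iff, pi_norm_le_iff_of_nonneg Real.pi_pos.le]
      intro i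
      fin_cases i
      · simpa [abs_of_nonneg (Real.arccos_nonneg _)] using Real.arccos_le_pi _
      · simpa using Complex.abs_arg_le_pi z
    · ext i
      fin_cases i
      · simp [f, ← hn, Complex.norm_mul_cos_arg, z]
      · simp [f, ← hn, Complex.norm_mul_sin_arg, z]
      · simp [f, Real.cos_arccos hz'.1 hz'.2]
  refine (measure_mono hsub).trans_lt (h1.trans_lt ?_)
  exact ENNReal.mul_lt_top (ENNReal.rpow_lt_top_of_nonneg (by norm_num) ENNReal.coe_ne_top)
    hc.measure_lt_top

lemma sphere_measure_le (a : EuclideanSpace ℝ (Fin 3)) (t : ℝ) (ht : 0 < t) :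
    (μH[2] : Measure (EuclideanSpace ℝ (Fin 3))) (Metric.sphere a t) ≤
      ENNReal.ofReal (t ^ 2) * (μH[2] : Measure (EuclideanSpace ℝ (Fin 3))) (Metric.sphere 0 1) := by
  have hL : LipschitzWith (Real.toNNReal t) (fun x : EuclideanSpace ℝ (Fin 3) => a + t • x) := by
    apply LipschitzWith.of_dist_le_mul
    intro x y
    rw [dist_add_left, dist_smul₀, Real.norm_of_nonneg ht.le, Real.coe_toNNReal _ ht.le]
  have h := hL.hausdorffMeasure_image_le (d := 2) (by norm_num) (Metric.sphere 0 1)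
  have hsub : Metric.sphere a t ⊆
      (fun x : EuclideanSpace ℝ (Fin 3) => a + t • x) '' Metric.sphere 0 1 := by
    intro x hx
    have hx' : ‖x - a‖ = t := by simpa using hx
    refine ⟨t⁻¹ • (x - a), ?_, ?_⟩
    · simp [norm_smul, hx', abs_of_pos ht, ht.ne']
    · simp [smul_smul, ht.ne']
  refine (measure_mono hsub).trans (h.trans_eq ?_)
  congr 1
  rw [ENNReal.ofReal_pow ht.le]
  norm_cast

lemma inner_bound (a : EuclideanSpace ℝ (Fin 3)) (t : ℝ) (ht : 0 < t) (hta : t < ‖a‖) :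
    ‖∫ x in Metric.sphere a t, (‖x‖ ^ 2)⁻¹ ∂μH[2]‖ ≤
      ((‖a‖ - t) ^ 2)⁻¹ *
        (t ^ 2 * (μH[2] : Measure (EuclideanSpace ℝ (Fin 3))).real (Metric.sphere 0 1)) := by
  have hle := sphere_measure_le a t ht
  have hfin : ENNReal.ofReal (t ^ 2) *
      (μH[2] : Measure (EuclideanSpace ℝ (Fin 3))) (Metric.sphere 0 1) < ⊤ :=
    ENNReal.mul_lt_top ENNReal.ofReal_lt_top unit_sphere_finite
  have h1 := norm_setIntegral_le_of_norm_le_const (μ := (μH[2] : Measure (EuclideanSpace ℝ (Fin 3))))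
    (s := Metric.sphere a t) (f := fun x => (‖x‖ ^ 2)⁻¹) (C := ((‖a‖ - t) ^ 2)⁻¹)
    (hle.trans_lt hfin) (by
      intro x hx
      have hx' : ‖x - a‖ = t := by simpa using hx
      have h2 : ‖a‖ - t ≤ ‖x‖ := by
        have := norm_sub_norm_le a x
        rw [norm_sub_rev, hx'] at this
        linarith
      have h3 : 0 < ‖a‖ - t := by linarith
      rw [Real.norm_of_nonneg (by positivity)]
      gcongr)
  refine h1.trans ?_
  gcongr
  have h4 := ENNReal.toReal_mono hfin.ne hle
  rwa [ENNReal.toReal_mul, ENNReal.toReal_ofReal (by positivity)] at h4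

lemma outer_bound (a : EuclideanSpace ℝ (Fin 3)) (r : ℝ) (hr : 1 < r) (hra : r < ‖a‖) :
    ‖(r ^ 2)⁻¹ * ∫ t in (1 : ℝ)..r, ∫ x in Metric.sphere a t, (‖x‖ ^ 2)⁻¹ ∂μH[2]‖ ≤
      (μH[2] : Measure (EuclideanSpace ℝ (Fin 3))).real (Metric.sphere 0 1) * (‖a‖ - r)⁻¹ := by
  set C := (μH[2] : Measure (EuclideanSpace ℝ (Fin 3))).real (Metric.sphere 0 1) with hC
  have hC0 : 0 ≤ C := measureReal_nonneg
  have hpos : ∀ t ∈ Set.uIcc 1 r, 0 < ‖a‖ - t := by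
    intro t ht
    rw [Set.uIcc_of_le hr.le] at ht
    linarith [ht.2]
  have hint : IntervalIntegrable (fun t => ((‖a‖ - t) ^ 2)⁻¹ * (r ^ 2 * C)) volume 1 r := by
    apply ContinuousOn.intervalIntegrable
    apply ContinuousOn.mul _ continuousOn_const
    apply ContinuousOn.inv₀ (by fun_prop)
    intro t ht
    have := hpos t ht
    positivity
  have h1 := intervalIntegral.norm_integral_le_of_norm_le (μ := volume)
    (f := fun t => ∫ x in Metric.sphere a t, (‖x‖ ^ 2)⁻¹ ∂μH[2]) hr.le
    (Eventually.of_forall (by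
      intro t ht
      have ht0 : 0 < t := by linarith [ht.1]
      refine (inner_bound a t ht0 (ht.2.trans_lt hra)).trans ?_
      have := ht.2
      gcongr)) hint
  have h2 := intervalIntegral.integral_eq_sub_of_hasDerivAt (a := 1) (b := r)
    (f := fun t => (‖a‖ - t)⁻¹ * (r ^ 2 * C)) (f' := fun t => ((‖a‖ - t) ^ 2)⁻¹ * (r ^ 2 * C))
    (by
      intro t ht
      have := (((hasDerivAt_id t).const_sub ‖a‖).inv (hpos t ht).ne').mul_const (r ^ 2 * C)
      refine this.congr_deriv ?_
      simp [div_eq_mul_inv]) hint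
  rw [h2] at h1
  have hp : 0 < ‖a‖ - 1 := by linarith
  have h3 : 0 ≤ (‖a‖ - 1)⁻¹ * (r ^ 2 * C) := by positivity
  have hr2 : 0 < r ^ 2 := by positivity
  rw [norm_mul, Real.norm_of_nonneg (by positivity), inv_mul_le_iff₀ hr2]
  calc _ ≤ _ := h1
    _ ≤ (‖a‖ - r)⁻¹ * (r ^ 2 * C) := by linarith
    _ = _ := by ring


/-- If `ρ_k > 1`, `ρ_k → ∞` and `‖a_k‖ - ρ_k → ∞`, then
`ρ_k⁻² ∫_1^{ρ_k} (∫_{S_t(a_k)} ‖x‖⁻² dH²) dt → 0`. -/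
theorem offcenter_quadratic_shell_integral_small
    (a : ℕ → EuclideanSpace ℝ (Fin 3)) (ρ : ℕ → ℝ)
    (hρ1 : ∀ k, 1 < ρ k)
    (hρ : Tendsto ρ atTop atTop)
    (haρ : Tendsto (fun k => ‖a k‖ - ρ k) atTop atTop) :
    Tendsto (fun k => (ρ k ^ 2)⁻¹ *
        ∫ t in (1 : ℝ)..(ρ k), ∫ x in Metric.sphere (a k) t, (‖x‖ ^ 2)⁻¹ ∂μH[2])
      atTop (nhds 0) := by
  set C := (μH[2] : Measure (EuclideanSpace ℝ (Fin 3))).real (Metric.sphere 0 1) with hC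
  have hlim : Tendsto (fun k => C * (‖a k‖ - ρ k)⁻¹) atTop (nhds 0) := by
    simpa using (tendsto_inv_atTop_zero.comp haρ).const_mul C
  refine squeeze_zero_norm' ?_ hlim
  filter_upwards [haρ.eventually_gt_atTop 0] with k hk
  exact outer_bound (a k) (ρ k) (hρ1 k) (by linarith)
end

section
/- Let a ∈ ℝ³ and let r be a real number with 1 ≤ r ≤ |a|. Then ∫_0^{2π} ∫_{π − 2r^{-1/4}}^{π} r² sinφ · (|a|² + r² − 2|a|r cosφ)^{-1/2} dφ dθ ≤ 4π√r. -/
/-- Spherical-cap estimate: for `1 ≤ r ≤ ‖a‖`, the integral of `1/|x|` over the cap of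
angular width `2 r^{-1/4}` (around the point closest to the origin) of the sphere of
radius `r` centered at `a`, written in spherical coordinates, is at most `4π√r`. -/
theorem cap_integral_inv_norm_le (a : EuclideanSpace ℝ (Fin 3)) (r : ℝ)
    (hr : 1 ≤ r) (hra : r ≤ ‖a‖) :
    (∫ θ in (0 : ℝ)..(2 * Real.pi),
        ∫ φ in (Real.pi - 2 * r ^ (-(1 / 4 : ℝ)))..Real.pi,
          r ^ 2 * Real.sin φ
            * (‖a‖ ^ 2 + r ^ 2 - 2 * ‖a‖ * r * Real.cos φ) ^ (-(1 / 2 : ℝ)))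
      ≤ 4 * Real.pi * Real.sqrt r := by
  have hr0 : 0 < r := by linarith
  have hpi := Real.pi_gt_three
  generalize ‖a‖ = A at hra ⊢
  have hd0 : 0 < r ^ (-(1 / 4 : ℝ)) := Real.rpow_pos_of_pos hr0 _
  have hd1 : r ^ (-(1 / 4 : ℝ)) ≤ 1 :=
    Real.rpow_le_one_of_one_le_of_nonpos hr (by norm_num)
  have hd2 : r * (r ^ (-(1 / 4 : ℝ))) ^ 2 = Real.sqrt r := by
    rw [Real.sqrt_eq_rpow, ← Real.rpow_natCast, ← Real.rpow_mul hr0.le]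
    nth_rewrite 1 [← Real.rpow_one r]
    rw [← Real.rpow_add hr0]
    norm_num
  generalize r ^ (-(1 / 4 : ℝ)) = d at hd0 hd1 hd2 ⊢
  have hle : Real.pi - 2 * d ≤ Real.pi := by linarith
  have hD : ∀ φ ∈ Set.Icc (Real.pi - 2 * d) Real.pi,
      r ^ 2 ≤ A ^ 2 + r ^ 2 - 2 * A * r * Real.cos φ := by
    intro φ hφ
    have hc : Real.cos φ ≤ 1 / 2 := by
      rw [← Real.cos_pi_div_three]
      apply Real.cos_le_cos_of_nonneg_of_le_pi (by positivity) hφ.2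
      linarith [hφ.1]
    have hA : 0 < A * r := mul_pos (by linarith) hr0
    nlinarith [mul_le_mul_of_nonneg_left hc hA.le]
  have key : (∫ φ in (Real.pi - 2 * d)..Real.pi, r ^ 2 * Real.sin φ
            * (A ^ 2 + r ^ 2 - 2 * A * r * Real.cos φ) ^ (-(1 / 2 : ℝ)))
      ≤ ∫ φ in (Real.pi - 2 * d)..Real.pi, r * (Real.pi - φ) := by
    apply intervalIntegral.integral_mono_on hle
    · apply ContinuousOn.intervalIntegrable
      rw [Set.uIcc_of_le hle]
      apply ContinuousOn.mul (by fun_prop)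
      apply ContinuousOn.rpow_const (by fun_prop)
      intro φ hφ
      left
      have := hD φ hφ
      have : 0 < r ^ 2 := by positivity
      linarith
    · apply Continuous.intervalIntegrable
      fun_prop
    · intro φ hφ
      have h1 : (A ^ 2 + r ^ 2 - 2 * A * r * Real.cos φ) ^ (-(1 / 2 : ℝ)) ≤ r⁻¹ := by
        calc _ ≤ (r ^ 2) ^ (-(1 / 2 : ℝ)) :=
              Real.rpow_le_rpow_of_nonpos (by positivity) (hD φ hφ) (by norm_num)
          _ = r⁻¹ := by
              rw [← Real.rpow_natCast, ← Real.rpow_mul hr0.le, ← Real.rpow_neg_one]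
              norm_num
      have hs0 : 0 ≤ Real.sin φ :=
        Real.sin_nonneg_of_nonneg_of_le_pi (by linarith [hφ.1]) hφ.2
      have hs1 : Real.sin φ ≤ Real.pi - φ := by
        rw [← Real.sin_pi_sub]
        exact Real.sin_le (by linarith [hφ.2])
      calc _ ≤ r ^ 2 * Real.sin φ * r⁻¹ := by gcongr
        _ = r * Real.sin φ := by field_simp
        _ ≤ _ := by gcongr
  have hval : (∫ φ in (Real.pi - 2 * d)..Real.pi, r * (Real.pi - φ)) = 2 * Real.sqrt r := by
    rw [intervalIntegral.integral_const_mul,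
      intervalIntegral.integral_comp_sub_left (fun x => x), integral_id, ← hd2]
    ring
  rw [hval] at key
  rw [intervalIntegral.integral_const, smul_eq_mul]
  nlinarith [mul_le_mul_of_nonneg_left key Real.two_pi_pos.le]
end

section
/- Let a ∈ ℝ³ and let r, s be real numbers with 0 < s ≤ r ≤ |a|. Then ∫_{{x ∈ ℝ³ : r − s ≤ |x − a| ≤ r + s}} |x|^{-1} dx ≤ 32π·r·s, where the integral is with respect to Lebesgue measure on ℝ³. -/
open MeasureTheory

namespace ShellAux

open Set Real

lemma polar {f : ℝ × ℝ → ENNReal} (hf : Measurable f) :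
    ∫⁻ p, f p = ∫⁻ t in Ioi (0 : ℝ), ∫⁻ φ in Ioo (-π) π,
      ENNReal.ofReal t * f (t * cos φ, t * sin φ) := by
  rw [← lintegral_comp_polarCoord_symm, polarCoord_target, Measure.volume_eq_prod,
    ← Measure.prod_restrict, lintegral_prod]
  · rfl
  · apply Measurable.aemeasurable
    simp only [polarCoord_symm_apply, smul_eq_mul]
    fun_prop

/-- The one-dimensional angular integral. -/
lemma angular {t A : ℝ} (ht : 0 < t) (hA : 0 < A) (htA : t ≠ A) :
    ∫⁻ φ in Ioo 0 π, ENNReal.ofReal (sin φ * (√(t ^ 2 + A ^ 2 + 2 * t * A * cos φ))⁻¹)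
      ≤ ENNReal.ofReal (2 / A) := by
  have hpos : ∀ φ, 0 < t ^ 2 + A ^ 2 + 2 * t * A * cos φ := by
    intro φ
    have h1 := neg_one_le_cos φ
    have h2 : 0 < (t - A) ^ 2 := by
      have := sub_ne_zero.2 htA
      positivity
    nlinarith [mul_pos ht hA]
  have hcont : Continuous fun φ => sin φ * (√(t ^ 2 + A ^ 2 + 2 * t * A * cos φ))⁻¹ := by
    refine continuous_sin.mul (Continuous.inv₀ (by fun_prop) fun φ => ?_)
    exact (sqrt_pos.2 (hpos φ)).ne'
  have hder : ∀ φ ∈ uIcc 0 π, HasDerivAt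
      (fun φ => -(√(t ^ 2 + A ^ 2 + 2 * t * A * cos φ)) / (t * A))
      (sin φ * (√(t ^ 2 + A ^ 2 + 2 * t * A * cos φ))⁻¹) φ := by
    intro φ _
    have h := ((((hasDerivAt_cos φ).const_mul (2 * t * A)).const_add (t ^ 2 + A ^ 2)).sqrt
      (hpos φ).ne').neg.div_const (t * A)
    have hs := (sqrt_pos.2 (hpos φ)).ne'
    convert! h using 1
    field_simp
  have hint := intervalIntegral.integral_eq_sub_of_hasDerivAt hder (hcont.intervalIntegrable _ _)
  rw [← ofReal_integral_eq_lintegral_ofReal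
    ((hcont.integrableOn_Icc (a := 0) (b := π)).mono_set Ioo_subset_Icc_self),
    ← integral_Ioc_eq_integral_Ioo, ← intervalIntegral.integral_of_le pi_pos.le, hint]
  · apply ENNReal.ofReal_le_ofReal
    have e1 : t ^ 2 + A ^ 2 + 2 * t * A * cos π = (t - A) ^ 2 := by rw [cos_pi]; ring
    have e2 : t ^ 2 + A ^ 2 + 2 * t * A * cos 0 = (t + A) ^ 2 := by rw [cos_zero]; ring
    rw [e1, e2, sqrt_sq_eq_abs, sqrt_sq (by positivity), ← sub_div,
      div_le_div_iff₀ (by positivity) hA]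
    have : A - t ≤ |t - A| := by rw [abs_sub_comm]; exact le_abs_self _
    nlinarith
  · refine (ae_restrict_iff' measurableSet_Ioo).2 (ae_of_all _ fun φ hφ => ?_)
    have := sin_pos_of_mem_Ioo hφ
    simp only [Pi.zero_apply]
    positivity

open Classical in
/-- The integrand in cylindrical coordinates. -/
noncomputable def g (A q R z w : ℝ) : ENNReal :=
  if q ≤ √(z ^ 2 + w) ∧ √(z ^ 2 + w) ≤ R then ENNReal.ofReal (√((z + A) ^ 2 + w))⁻¹ else 0

lemma measurable_g (A q R : ℝ) : Measurable fun p : ℝ × ℝ => g A q R p.1 p.2 := by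
  unfold g
  refine Measurable.ite ?_ (by fun_prop) measurable_const
  have hm : Measurable fun p : ℝ × ℝ => √(p.1 ^ 2 + p.2) := by fun_prop
  exact hm (measurableSet_Icc (a := q) (b := R))

lemma measurable_g_comp {α : Type*} [MeasurableSpace α] (A q R : ℝ) {u v : α → ℝ}
    (hu : Measurable u) (hv : Measurable v) : Measurable fun x => g A q R (u x) (v x) :=
  (measurable_g A q R).comp (hu.prodMk hv)

/-- The half-plane integral. -/
lemma half_plane {A r s : ℝ} (hA : 0 < A) (hs : 0 < s) (hsr : s ≤ r) :
    ∫⁻ p : ℝ × ℝ, ENNReal.ofReal p.2 * g A (r - s) (r + s) p.1 (p.2 ^ 2)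
      ≤ ENNReal.ofReal (16 * r ^ 2 * s / A) := by
  have hm : Measurable fun p : ℝ × ℝ => ENNReal.ofReal p.2 * g A (r - s) (r + s) p.1 (p.2 ^ 2) :=
    (by fun_prop : Measurable fun p : ℝ × ℝ => ENNReal.ofReal p.2).mul
      (measurable_g_comp _ _ _ measurable_fst (by fun_prop))
  rw [polar hm]
  have key : ∀ᵐ t : ℝ, t ∈ Ioi (0 : ℝ) → (∫⁻ φ in Ioo (-π) π, ENNReal.ofReal t *
      (ENNReal.ofReal (t * sin φ) * g A (r - s) (r + s) (t * cos φ) ((t * sin φ) ^ 2)))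
      ≤ (Icc (r - s) (r + s)).indicator (fun _ => ENNReal.ofReal (8 * r ^ 2 / A)) t := by
    have hne : ∀ᵐ t : ℝ, t ≠ A := by
      simp [ae_iff]
    filter_upwards [hne] with t htA ht
    have ht : 0 < t := ht
    have e1 : ∀ φ, √((t * cos φ) ^ 2 + (t * sin φ) ^ 2) = t := by
      intro φ
      rw [show (t * cos φ) ^ 2 + (t * sin φ) ^ 2 = t ^ 2 * (sin φ ^ 2 + cos φ ^ 2) by ring,
        sin_sq_add_cos_sq, mul_one, sqrt_sq ht.le]
    have e2 : ∀ φ, (t * cos φ + A) ^ 2 + (t * sin φ) ^ 2 = t ^ 2 + A ^ 2 + 2 * t * A * cos φ := by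
      intro φ
      linear_combination t ^ 2 * sin_sq_add_cos_sq φ
    simp only [g, e1, e2]
    by_cases hmem : r - s ≤ t ∧ t ≤ r + s
    · rw [indicator_of_mem (by exact hmem)]
      simp only [hmem, and_self, if_true]
      calc _ ≤ ∫⁻ φ in Ioo 0 π, ENNReal.ofReal (t ^ 2) *
            ENNReal.ofReal (sin φ * (√(t ^ 2 + A ^ 2 + 2 * t * A * cos φ))⁻¹) := by
            rw [← lintegral_indicator measurableSet_Ioo, ← lintegral_indicator measurableSet_Ioo]
            apply lintegral_mono
            intro φ
            by_cases h : φ ∈ Ioo (-π) π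
            · by_cases h0 : 0 < φ
              · rw [indicator_of_mem h, indicator_of_mem (show φ ∈ Ioo 0 π from ⟨h0, h.2⟩)]
                have hsin := sin_pos_of_mem_Ioo (show φ ∈ Ioo 0 π from ⟨h0, h.2⟩)
                rw [← ENNReal.ofReal_mul (by positivity), ← ENNReal.ofReal_mul (by positivity),
                  ← ENNReal.ofReal_mul (by positivity)]
                apply le_of_eq
                congr 1
                ring
              · rw [indicator_of_mem h]
                have hsin := sin_nonpos_of_nonpos_of_neg_pi_le (not_lt.1 h0) h.1.le
                rw [ENNReal.ofReal_of_nonpos (mul_nonpos_of_nonneg_of_nonpos ht.le hsin)]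
                simp
            · rw [indicator_of_notMem h]
              exact zero_le
        _ = ENNReal.ofReal (t ^ 2) * ∫⁻ φ in Ioo 0 π,
            ENNReal.ofReal (sin φ * (√(t ^ 2 + A ^ 2 + 2 * t * A * cos φ))⁻¹) :=
            lintegral_const_mul' _ _ ENNReal.ofReal_ne_top
        _ ≤ ENNReal.ofReal (t ^ 2) * ENNReal.ofReal (2 / A) := by
            gcongr
            exact angular ht hA htA
        _ ≤ _ := by
            rw [← ENNReal.ofReal_mul (by positivity)]
            apply ENNReal.ofReal_le_ofReal
            rw [← mul_div_assoc]
            apply div_le_div_of_nonneg_right _ hA.le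
            nlinarith [hmem.2]
    · simp only [if_neg hmem, mul_zero, lintegral_zero]
      exact zero_le
  calc _ ≤ ∫⁻ t in Ioi (0 : ℝ),
        (Icc (r - s) (r + s)).indicator (fun _ => ENNReal.ofReal (8 * r ^ 2 / A)) t :=
        lintegral_mono_ae ((ae_restrict_iff' measurableSet_Ioi).2 key)
    _ ≤ ∫⁻ t, (Icc (r - s) (r + s)).indicator (fun _ => ENNReal.ofReal (8 * r ^ 2 / A)) t :=
        setLIntegral_le_lintegral _ _
    _ = ENNReal.ofReal (16 * r ^ 2 * s / A) := by
        rw [lintegral_indicator measurableSet_Icc, setLIntegral_const, Real.volume_Icc,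
          ← ENNReal.ofReal_mul (by positivity)]
        congr 1
        ring

/-- The integral in cylindrical coordinates. -/
lemma cylinder {A r s : ℝ} (hA : 0 < A) (hs : 0 < s) (hsr : s ≤ r) :
    ∫⁻ z : ℝ, ∫⁻ p : ℝ × ℝ, g A (r - s) (r + s) z (p.1 ^ 2 + p.2 ^ 2)
      ≤ ENNReal.ofReal (2 * π) * ENNReal.ofReal (16 * r ^ 2 * s / A) := by
  have h1 : ∀ z : ℝ, ∫⁻ p : ℝ × ℝ, g A (r - s) (r + s) z (p.1 ^ 2 + p.2 ^ 2) ≤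
      ENNReal.ofReal (2 * π) *
        ∫⁻ ρ : ℝ, ENNReal.ofReal ρ * g A (r - s) (r + s) z (ρ ^ 2) := by
    intro z
    rw [polar (measurable_g_comp _ _ _ measurable_const (by fun_prop))]
    have e : ∀ t φ : ℝ, (t * cos φ) ^ 2 + (t * sin φ) ^ 2 = t ^ 2 := by
      intro t φ
      linear_combination t ^ 2 * sin_sq_add_cos_sq φ
    simp only [e, setLIntegral_const, Real.volume_Ioo]
    rw [lintegral_mul_const' _ _ ENNReal.ofReal_ne_top, mul_comm,
      show π - -π = 2 * π by ring]
    exact mul_le_mul_right (setLIntegral_le_lintegral _ _) _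
  refine (lintegral_mono h1).trans ?_
  rw [lintegral_const_mul' _ _ ENNReal.ofReal_ne_top]
  gcongr
  refine le_trans (le_of_eq ?_) (half_plane hA hs hsr)
  rw [Measure.volume_eq_prod, lintegral_prod]
  exact ((by fun_prop : Measurable fun p : ℝ × ℝ => ENNReal.ofReal p.2).mul
      (measurable_g_comp _ _ _ measurable_fst (by fun_prop))).aemeasurable

/-- Fubini on three-dimensional Euclidean space. -/
lemma fubini3 {f : ℝ × (ℝ × ℝ) → ENNReal} (hf : Measurable f) :
    ∫⁻ y : EuclideanSpace ℝ (Fin 3), f (y 0, (y 1, y 2)) = ∫⁻ z : ℝ, ∫⁻ p : ℝ × ℝ, f (z, p) := by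
  have hm : Measurable fun y : Fin 3 → ℝ => f (y 0, (y 1, y 2)) := by fun_prop
  have h1 := (PiLp.volume_preserving_ofLp (Fin 3)).lintegral_comp hm
  have h2 := (volume_preserving_piFinSuccAbove (fun _ : Fin 3 => ℝ) 0)
  have h3 := (MeasurePreserving.id (volume : Measure ℝ)).prod (volume_preserving_finTwoArrow ℝ)
  have h4 := (h3.comp h2).lintegral_comp hf
  rw [← lintegral_prod _ hf.aemeasurable]
  exact h1.trans h4

lemma exists_basis (a : EuclideanSpace ℝ (Fin 3)) (ha : a ≠ 0) :
    ∃ b : OrthonormalBasis (Fin 3) ℝ (EuclideanSpace ℝ (Fin 3)),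
      b.repr a = EuclideanSpace.single 0 ‖a‖ := by
  have ho : Orthonormal ℝ (({0} : Set (Fin 3)).domRestrict fun _ => ‖a‖⁻¹ • a) := by
    constructor
    · intro i
      simp [norm_smul, ha]
    · intro i j hij
      exact absurd (Subsingleton.elim i j) hij
  obtain ⟨b, hb⟩ := ho.exists_orthonormalBasis_extension_of_card_eq (by simp)
  refine ⟨b, ?_⟩
  have h0 := hb 0 rfl
  have : a = ‖a‖ • b 0 := by
    rw [h0, smul_smul, mul_inv_cancel₀ (norm_ne_zero_iff.2 ha), one_smul]
  conv_lhs => rw [this]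
  rw [map_smul, b.repr_self]
  ext i
  simp

end ShellAux

open ShellAux

/-- Thin-shell estimate: for `0 < s ≤ r ≤ ‖a‖`, the integral of `‖x‖⁻¹` (with respect
to Lebesgue measure on `ℝ³`) over the closed spherical shell
`{r - s ≤ ‖x - a‖ ≤ r + s}` is at most `32 π r s`. -/
theorem shell_integral_inv_norm_le (a : EuclideanSpace ℝ (Fin 3)) (r s : ℝ)
    (hs : 0 < s) (hsr : s ≤ r) (hra : r ≤ ‖a‖) :
    ∫⁻ x in {x : EuclideanSpace ℝ (Fin 3) | r - s ≤ ‖x - a‖ ∧ ‖x - a‖ ≤ r + s},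
        ENNReal.ofReal ‖x‖⁻¹
      ≤ ENNReal.ofReal (32 * Real.pi * r * s) := by
  classical
  have hr : 0 < r := hs.trans_le hsr
  have hA : 0 < ‖a‖ := hr.trans_le hra
  obtain ⟨b, hb⟩ := exists_basis a (norm_pos_iff.1 hA)
  have hS : MeasurableSet
      {x : EuclideanSpace ℝ (Fin 3) | r - s ≤ ‖x - a‖ ∧ ‖x - a‖ ≤ r + s} :=
    (by fun_prop : Measurable fun x : EuclideanSpace ℝ (Fin 3) => ‖x - a‖)
      (measurableSet_Icc (a := r - s) (b := r + s))
  rw [← lintegral_indicator hS, ← lintegral_add_right_eq_self _ a]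
  have hpt : ∀ x : EuclideanSpace ℝ (Fin 3),
      {x : EuclideanSpace ℝ (Fin 3) | r - s ≤ ‖x - a‖ ∧ ‖x - a‖ ≤ r + s}.indicator
        (fun x => ENNReal.ofReal ‖x‖⁻¹) (x + a) =
      (fun y : EuclideanSpace ℝ (Fin 3) =>
        g ‖a‖ (r - s) (r + s) (y 0) (y 1 ^ 2 + y 2 ^ 2)) (b.repr x) := by
    intro x
    have e1 : √((b.repr x 0) ^ 2 + ((b.repr x 1) ^ 2 + (b.repr x 2) ^ 2)) = ‖x‖ := by
      rw [← b.repr.norm_map x, EuclideanSpace.norm_eq, Fin.sum_univ_three]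
      simp [add_assoc]
    have e2 : √((b.repr x 0 + ‖a‖) ^ 2 + ((b.repr x 1) ^ 2 + (b.repr x 2) ^ 2)) = ‖x + a‖ := by
      rw [← b.repr.norm_map (x + a), map_add, hb, EuclideanSpace.norm_eq (b.repr x + _), Fin.sum_univ_three]
      simp [add_assoc]
    simp only [g, e1, e2, Set.indicator_apply, Set.mem_ofPred_eq, add_sub_cancel_right]
  simp only [hpt]
  have hg : Measurable fun p : ℝ × (ℝ × ℝ) =>
      g ‖a‖ (r - s) (r + s) p.1 (p.2.1 ^ 2 + p.2.2 ^ 2) :=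
    measurable_g_comp _ _ _ measurable_fst (by fun_prop)
  rw [b.measurePreserving_repr.lintegral_comp
    (f := fun y : EuclideanSpace ℝ (Fin 3) =>
        g ‖a‖ (r - s) (r + s) (y 0) (y 1 ^ 2 + y 2 ^ 2))
    (measurable_g_comp _ _ _ (by fun_prop) (by fun_prop)), fubini3 hg]
  refine (cylinder hA hs hsr).trans ?_
  rw [← ENNReal.ofReal_mul (by positivity)]
  apply ENNReal.ofReal_le_ofReal
  rw [← mul_div_assoc, div_le_iff₀ hA]
  have h : 0 ≤ 32 * Real.pi * r * s := by positivity
  nlinarith [mul_le_mul_of_nonneg_left hra h]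
end
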